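/- Let H be a countable nonempty set of measurable maps from a measurable space X to Δ_K, let S and T be probability measures on X with measurable labeling maps y_S, y_T : X → Δ_K, and let n, m ≥ 1. For any δ > 0, with probability at least 1 − 3δ over independent i.i.d. samples x ∼ S^n and z ∼ T^m, the following holds simultaneously for all h ∈ H: e_T(h) ≤ e_{Ŝ_x}(h) + d_{h,H}(Ŝ_x, T̂_z) + λ + Ω, where λ = inf_{h′ ∈ H} (e_S(h′) + e_T(h′)) and Ω = 2 R_{n,S}(G_Γ H) + 2 R_{n,S}(L_S H) + 2 √(log(2/δ)/(2n)) + 2 R_{m,T}(G_Γ H) + √(log(2/δ)/(2m)), with L_S H = { x ↦ Γ(h(x), y_S(x)) : h ∈ H } the class of source loss functions. -/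

import Mathlib

/-!
The disparity `Gam p q` is the probability that independent draws from `p` and `q` differ, so it
is symmetric and satisfies the triangle inequality (`Gam_triangle`). Going from `h` to `yT`
through `h'` on the target, and from `h'` to `h` through `yS` on the source, gives for every
`h' ∈ H`

  `e_T(h) ≤ e_S(h) + (dis_T(h', h) - dis_S(h', h)) + e_S(h') + e_T(h')`.

The three population quantities `e_S(h)`, `dis_T(h', h)` and `-dis_S(h', h)` are then bounded by
their empirical versions plus an error term, uniformly over `H`, each outside an event of
probability at most `δ` (`uniform_deviation`). The empirical difference is at most the empirical
discrepancy, and taking the infimum over `h'` produces `λ`.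

The uniform bound is the classical one. The supremum of the deviations changes by at most `1 / n`
when one sample point is altered, so it concentrates around its mean by McDiarmid's inequality
(`mcdiarmid`), which is derived from Hoeffding's lemma by induction on the number of coordinates.
Its mean is at most twice the Rademacher complexity by symmetrization with a ghost sample
(`integral_supDev_le`).
-/

open MeasureTheory

/-- Classifier determinacy disparity Γ(p,q) = ∑_{m≠n} p_m q_n = 1 − ∑_k p_k q_k. -/
noncomputable def Gam {K : ℕ} (p q : Fin K → ℝ) : ℝ := 1 - ∑ k, p k * q k

/-- Membership in the probability simplex Δ_K. -/
def inSimplex {K : ℕ} (p : Fin K → ℝ) : Prop := (∀ k, 0 ≤ p k) ∧ ∑ k, p k = 1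

/-- Expected determinacy disparity dis_D(h₁,h₂) = ∫ Γ(h₁(x), h₂(x)) dD(x). -/
noncomputable def dis {X : Type*} [MeasurableSpace X] {K : ℕ}
    (D : Measure X) (h₁ h₂ : X → Fin K → ℝ) : ℝ :=
  ∫ x, Gam (h₁ x) (h₂ x) ∂D

/-- Determinacy disparity discrepancy d_{h,H}(P,Q) = sup_{h'∈H} (dis_Q(h',h) − dis_P(h',h)). -/
noncomputable def ddd {X : Type*} [MeasurableSpace X] {K : ℕ}
    (H : Set (X → Fin K → ℝ)) (h : X → Fin K → ℝ) (P Q : Measure X) : ℝ :=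
  sSup {r | ∃ h' ∈ H, r = dis Q h' h - dis P h' h}

/-- Empirical measure of a sample x = (x₁,…,xₙ): mass 1/n at each xᵢ. -/
noncomputable def empMeasure {X : Type*} [MeasurableSpace X] {n : ℕ} (x : Fin n → X) :
    Measure X :=
  ((n : ENNReal))⁻¹ • ∑ i, Measure.dirac (x i)

/-- The induced class G_Γ H = { x ↦ Γ(h₁(x), h₂(x)) : h₁, h₂ ∈ H }. -/
def GGam {X : Type*} {K : ℕ} (H : Set (X → Fin K → ℝ)) : Set (X → ℝ) :=
  {g | ∃ h₁ ∈ H, ∃ h₂ ∈ H, g = fun x => Gam (h₁ x) (h₂ x)}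

/-- The class of source loss functions L_S H = { x ↦ Γ(h(x), y_S(x)) : h ∈ H }. -/
def LSclass {X : Type*} {K : ℕ} (H : Set (X → Fin K → ℝ)) (yS : X → Fin K → ℝ) :
    Set (X → ℝ) :=
  {g | ∃ h ∈ H, g = fun x => Gam (h x) (yS x)}

/-- Rademacher complexity R_{n,D}(G) = E_{x∼D^n} E_σ [sup_{g∈G} (1/n) ∑ᵢ σᵢ g(xᵢ)],
with the expectation over i.i.d. uniform signs written as an average over all
2^n sign patterns σ : Fin n → Bool (true ↦ +1, false ↦ −1). -/
noncomputable def rademacher {X : Type*} [MeasurableSpace X] (n : ℕ) (D : Measure X)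
    (G : Set (X → ℝ)) : ℝ :=
  ∫ x : Fin n → X,
    (∑ σ : Fin n → Bool,
        sSup {r | ∃ g ∈ G,
          r = (1 / (n : ℝ)) * ∑ i, (if σ i then (1 : ℝ) else -1) * g (x i)}) / 2 ^ n
    ∂(Measure.pi fun _ : Fin n => D)

/-! ### McDiarmid's inequality -/

lemma integrable_of_abs_le {Ω : Type*} [MeasurableSpace Ω] {μ : Measure Ω} [IsFiniteMeasure μ]
    {f : Ω → ℝ} (hf : Measurable f) {M : ℝ} (hM : ∀ x, |f x| ≤ M) : Integrable f μ :=
  Integrable.of_bound hf.aestronglyMeasurable M (ae_of_all _ hM)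

lemma integrable_exp_of_abs_le {Ω : Type*} [MeasurableSpace Ω] {μ : Measure Ω} [IsFiniteMeasure μ]
    {f : Ω → ℝ} (hf : Measurable f) {M : ℝ} (hM : ∀ x, |f x| ≤ M) (t a : ℝ) :
    Integrable (fun x => Real.exp (t * (f x - a))) μ := by
  refine integrable_of_abs_le (M := Real.exp (|t| * (M + |a|))) (by fun_prop) fun x => ?_
  rw [Real.abs_exp]
  refine Real.exp_le_exp.2 ((le_abs_self _).trans ?_)
  rw [abs_mul]
  gcongr
  exact (abs_sub _ _).trans (by gcongr; exact hM x)

/-- Hoeffding's lemma, with the range of `f` controlled through its oscillation. -/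
lemma hoeffding_mgf {Ω : Type*} [MeasurableSpace Ω] {μ : Measure Ω} [IsProbabilityMeasure μ]
    {f : Ω → ℝ} (hf : Measurable f) {M : ℝ} (hM : ∀ x, |f x| ≤ M) {c : ℝ}
    (hc : 0 ≤ c) (hfc : ∀ x y, f x - f y ≤ c) (t : ℝ) :
    ∫ x, Real.exp (t * (f x - ∫ y, f y ∂μ)) ∂μ ≤ Real.exp (t ^ 2 * c ^ 2 / 8) := by
  have : Nonempty Ω := by
    by_contra h
    rw [not_nonempty_iff] at h
    exact IsProbabilityMeasure.ne_zero μ (Measure.eq_zero_of_isEmpty μ)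
  have hbdd : BddBelow (Set.range f) := ⟨-M, by rintro _ ⟨x, rfl⟩; exact (abs_le.1 (hM x)).1⟩
  have hmem : ∀ x, f x ∈ Set.Icc (⨅ y, f y) ((⨅ y, f y) + c) := fun x =>
    ⟨ciInf_le hbdd x, by
      have : f x - c ≤ ⨅ y, f y := le_ciInf fun y => by linarith [hfc x y]
      linarith⟩
  have h := (ProbabilityTheory.hasSubgaussianMGF_of_mem_Icc (μ := μ) hf.aemeasurable
    (ae_of_all _ hmem)).mgf_le t
  rw [ProbabilityTheory.mgf] at h
  refine h.trans (le_of_eq ?_)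
  congr 1
  simp only [add_sub_cancel_left, NNReal.coe_pow, NNReal.coe_div, coe_nnnorm, Real.norm_eq_abs,
    abs_of_nonneg hc, NNReal.coe_ofNat]
  ring

/-- The exponential moment bound behind McDiarmid's inequality. The first coordinate is integrated
last: for fixed first coordinate `a` the induction hypothesis applies to `f (Fin.cons a ·)`, and
Hoeffding's lemma applies to the conditional mean `g a`, whose oscillation is again at most `c`. -/
lemma mcdiarmid_mgf {X : Type*} [MeasurableSpace X] (D : Measure X) [IsProbabilityMeasure D]
    {c : ℝ} (hc : 0 ≤ c) (t M : ℝ) (n : ℕ) : ∀ (f : (Fin n → X) → ℝ), Measurable f →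
      (∀ x, |f x| ≤ M) → (∀ x i a, f (Function.update x i a) - f x ≤ c) →
      ∫ x, Real.exp (t * (f x - ∫ y, f y ∂(Measure.pi fun _ => D))) ∂(Measure.pi fun _ => D)
        ≤ Real.exp (n * (t ^ 2 * c ^ 2 / 8)) := by
  induction n with
  | zero =>
    intro f hf hM hd
    have hcst : f = fun _ => f default := by
      funext x; rw [Subsingleton.elim x default]
    rw [hcst]; simp
  | succ n ih =>
    intro f hf hM hd
    set μ := Measure.pi fun _ : Fin n => D with hμ
    have hmp : MeasurePreserving (fun p : X × (Fin n → X) => (Fin.cons p.1 p.2 : Fin (n + 1) → X))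
        (D.prod μ) (Measure.pi fun _ => D) := by
      have := (measurePreserving_piFinSuccAbove (fun _ : Fin (n + 1) => D) 0).symm
      convert this using 1
      funext p
      simp [MeasurableEquiv.piFinSuccAbove_symm_apply, Fin.insertNthEquiv]
    have hint : ∀ φ : (Fin (n + 1) → X) → ℝ, Measurable φ →
        Integrable φ (Measure.pi fun _ => D) →
        ∫ x, φ x ∂(Measure.pi fun _ => D) = ∫ a, ∫ y, φ (Fin.cons a y) ∂μ ∂D := by
      intro φ hφ hi
      rw [← hmp.map_eq, integral_map hmp.measurable.aemeasurable hφ.aestronglyMeasurable,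
        integral_prod]
      exact hmp.integrable_comp_of_integrable hi
    have hF : Measurable fun p : X × (Fin n → X) => f (Fin.cons p.1 p.2) :=
      hf.comp hmp.measurable
    have hFa : ∀ a, Measurable fun y : Fin n → X => f (Fin.cons a y) := fun a =>
      hF.comp measurable_prodMk_left
    set E := ∫ y, f y ∂(Measure.pi fun _ => D) with hE
    set g : X → ℝ := fun a => ∫ y, f (Fin.cons a y) ∂μ with hg
    have hgm : Measurable g :=
      (StronglyMeasurable.integral_prod_right (hF.stronglyMeasurable)).measurable
    have hgM : ∀ a, |g a| ≤ M := fun a => by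
      have := norm_integral_le_of_norm_le_const (μ := μ) (f := fun y => f (Fin.cons a y)) (C := M)
        (ae_of_all _ fun y => hM _)
      simpa using this
    have hgE : ∫ a, g a ∂D = E := (hint f hf (integrable_of_abs_le hf hM)).symm
    have hgc : ∀ a b, g a - g b ≤ c := fun a b => by
      rw [hg, ← integral_sub (integrable_of_abs_le (hFa a) fun _ => hM _)
        (integrable_of_abs_le (hFa b) fun _ => hM _)]
      have : ∫ y, (f (Fin.cons a y) - f (Fin.cons b y)) ∂μ ≤ ∫ _, c ∂μ := by
        refine integral_mono ((integrable_of_abs_le (hFa a) fun _ => hM _).sub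
          (integrable_of_abs_le (hFa b) fun _ => hM _)) (integrable_const _) fun y => ?_
        have := hd (Fin.cons b y) 0 a
        rwa [Fin.update_cons_zero] at this
      simpa using this
    rw [hint _ (by fun_prop) (integrable_exp_of_abs_le hf hM t E)]
    have hstep : ∀ a, ∫ y, Real.exp (t * (f (Fin.cons a y) - E)) ∂μ
        ≤ Real.exp (n * (t ^ 2 * c ^ 2 / 8)) * Real.exp (t * (g a - E)) := fun a => by
      have h1 := ih (fun y => f (Fin.cons a y)) (hFa a) (fun _ => hM _) (fun y i b => by
        rw [Fin.cons_update]; exact hd _ _ _)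
      have h2 : ∀ y, Real.exp (t * (f (Fin.cons a y) - E))
          = Real.exp (t * (f (Fin.cons a y) - g a)) * Real.exp (t * (g a - E)) := fun y => by
        rw [← Real.exp_add]; ring_nf
      simp_rw [h2]
      rw [integral_mul_const]
      gcongr
    have hpush : (n + 1 : ℕ) * (t ^ 2 * c ^ 2 / 8)
        = n * (t ^ 2 * c ^ 2 / 8) + t ^ 2 * c ^ 2 / 8 := by push_cast; ring
    rw [hpush, Real.exp_add]
    refine (integral_mono ?_ ?_ hstep).trans ?_
    · have : Integrable (fun p : X × (Fin n → X) => Real.exp (t * (f (Fin.cons p.1 p.2) - E)))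
          (D.prod μ) := integrable_exp_of_abs_le hF (fun _ => hM _) t E
      exact this.integral_prod_left
    · exact (integrable_exp_of_abs_le hgm hgM t E).const_mul _
    · rw [integral_const_mul]
      gcongr
      have := hoeffding_mgf (μ := D) hgm hgM hc hgc t
      rwa [hgE] at this

/-- McDiarmid's inequality for i.i.d. samples and bounded differences `1 / n`. -/
lemma mcdiarmid {X : Type*} [MeasurableSpace X] (D : Measure X) [IsProbabilityMeasure D]
    {n : ℕ} (hn : 1 ≤ n) {f : (Fin n → X) → ℝ} (hf : Measurable f) {M : ℝ}
    (hM : ∀ x, |f x| ≤ M) (hd : ∀ x i a, f (Function.update x i a) - f x ≤ 1 / n)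
    {ε : ℝ} (hε : 0 ≤ ε) :
    (Measure.pi fun _ : Fin n => D)
      {x | ε ≤ f x - ∫ y, f y ∂(Measure.pi fun _ : Fin n => D)}
      ≤ ENNReal.ofReal (Real.exp (-2 * n * ε ^ 2)) := by
  have hn0 : (0 : ℝ) < n := by exact_mod_cast hn
  have hsub : ProbabilityTheory.HasSubgaussianMGF
      (fun x => f x - ∫ y, f y ∂(Measure.pi fun _ : Fin n => D)) (4 * (n : NNReal))⁻¹
      (Measure.pi fun _ : Fin n => D) := by
    refine ⟨fun t => integrable_exp_of_abs_le hf hM t _, fun t => ?_⟩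
    refine (mcdiarmid_mgf D (by positivity) t M n f hf hM hd).trans (le_of_eq ?_)
    congr 1
    push_cast
    field_simp
    ring
  have h := hsub.measure_ge_le hε
  rw [measureReal_def] at h
  rw [← ENNReal.ofReal_toReal (measure_ne_top _ _)]
  refine ENNReal.ofReal_le_ofReal (h.trans (le_of_eq ?_))
  congr 1
  push_cast
  field_simp
  ring

/-! ### Symmetrization -/

lemma integral_comp_of_measurePreserving {Ω Ω' : Type*} [MeasurableSpace Ω] [MeasurableSpace Ω']
    {μ : Measure Ω} {ν : Measure Ω'} {f : Ω → Ω'} (hf : MeasurePreserving f μ ν) {φ : Ω' → ℝ}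
    (hφ : Measurable φ) : ∫ x, φ (f x) ∂μ = ∫ y, φ y ∂ν := by
  rw [← hf.map_eq, integral_map hf.measurable.aemeasurable hφ.aestronglyMeasurable]

lemma bddAbove_of_abs_le {ι : Type*} {a : ι → ℝ} {M : ℝ} (h : ∀ j, |a j| ≤ M) :
    BddAbove (Set.range a) :=
  ⟨M, by rintro _ ⟨j, rfl⟩; exact (abs_le.1 (h j)).2⟩

lemma abs_ciSup_le {ι : Type*} [Nonempty ι] {a : ι → ℝ} {M : ℝ} (h : ∀ j, |a j| ≤ M) :
    |⨆ j, a j| ≤ M := by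
  obtain ⟨j⟩ := ‹Nonempty ι›
  exact abs_le.2 ⟨(abs_le.1 (h j)).1.trans (le_ciSup (bddAbove_of_abs_le h) j),
    haveI : Nonempty ι := ⟨j⟩; ciSup_le fun j => (abs_le.1 (h j)).2⟩

lemma abs_avg_le {n : ℕ} {a : Fin n → ℝ} {M : ℝ} (hM : 0 ≤ M) (h : ∀ i, |a i| ≤ M) :
    |(1 / (n : ℝ)) * ∑ i, a i| ≤ M := by
  rcases Nat.eq_zero_or_pos n with rfl | hn
  · simpa using hM
  have hn0 : (0 : ℝ) < n := by exact_mod_cast hn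
  rw [abs_mul, abs_of_nonneg (by positivity : (0 : ℝ) ≤ 1 / n)]
  have : |∑ i, a i| ≤ n * M := by
    refine (Finset.abs_sum_le_sum_abs _ _).trans ((Finset.sum_le_sum fun i _ => h i).trans ?_)
    simp
  calc 1 / (n : ℝ) * |∑ i, a i| ≤ 1 / n * (n * M) := by gcongr
    _ = M := by field_simp

/-- The supremum over the family `g` of the averages of `g j (x i)` weighted by `ε i`. -/
noncomputable def supAvg {X ι : Type*} {n : ℕ} (g : ι → X → ℝ) (ε : Fin n → ℝ) (x : Fin n → X) :
    ℝ := ⨆ j, (1 / (n : ℝ)) * ∑ i, ε i * g j (x i)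

/-- The ghost-sample analogue of `supAvg`: the supremum over `g` of the `ε`-weighted averages of
the differences `g j (w i).1 - g j (w i).2`. -/
noncomputable def supDiff {X ι : Type*} {n : ℕ} (g : ι → X → ℝ) (ε : Fin n → ℝ)
    (w : Fin n → X × X) : ℝ := ⨆ j, (1 / (n : ℝ)) * ∑ i, ε i * (g j (w i).1 - g j (w i).2)

/-- The uniform deviation of the empirical means from the true means, in the direction given by
the sign `s`. -/
noncomputable def supDev {X ι : Type*} [MeasurableSpace X] {n : ℕ} (D : Measure X)
    (g : ι → X → ℝ) (s : ℝ) (x : Fin n → X) : ℝ :=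
  ⨆ j, s * (∫ y, g j y ∂D - (1 / (n : ℝ)) * ∑ i, g j (x i))

section Symmetrization

variable {X ι : Type*} {g : ι → X → ℝ} {n : ℕ}

lemma abs_supAvg_term_le (hg : ∀ j x, |g j x| ≤ 1) {ε : Fin n → ℝ} (hε : ∀ i, |ε i| = 1)
    (x : Fin n → X) (j : ι) : |(1 / (n : ℝ)) * ∑ i, ε i * g j (x i)| ≤ 1 :=
  abs_avg_le zero_le_one fun i => by rw [abs_mul, hε, one_mul]; exact hg _ _

lemma abs_supDiff_term_le (hg : ∀ j x, |g j x| ≤ 1) {ε : Fin n → ℝ} (hε : ∀ i, |ε i| = 1)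
    (w : Fin n → X × X) (j : ι) :
    |(1 / (n : ℝ)) * ∑ i, ε i * (g j (w i).1 - g j (w i).2)| ≤ 2 :=
  abs_avg_le zero_le_two fun i => by
    rw [abs_mul, hε, one_mul]
    exact (abs_sub _ _).trans (by linarith [hg j (w i).1, hg j (w i).2])

variable [MeasurableSpace X]

lemma abs_supDev_term_le (D : Measure X) [IsProbabilityMeasure D] (hg : ∀ j x, |g j x| ≤ 1)
    {s : ℝ} (hs : |s| = 1) (x : Fin n → X) (j : ι) :
    |s * (∫ y, g j y ∂D - (1 / (n : ℝ)) * ∑ i, g j (x i))| ≤ 2 := by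
  rw [abs_mul, hs, one_mul]
  have h1 : |∫ y, g j y ∂D| ≤ 1 := by
    simpa using norm_integral_le_of_norm_le_const (μ := D) (f := g j) (C := 1)
      (ae_of_all _ fun y => hg j y)
  have h2 : |(1 / (n : ℝ)) * ∑ i, g j (x i)| ≤ 1 := abs_avg_le zero_le_one fun i => hg _ _
  exact (abs_sub _ _).trans (by linarith)

lemma measurable_supAvg [Countable ι] (hgm : ∀ j, Measurable (g j)) (ε : Fin n → ℝ) :
    Measurable (supAvg g ε) :=
  Measurable.iSup fun j => by fun_prop

lemma measurable_supDiff [Countable ι] (hgm : ∀ j, Measurable (g j)) (ε : Fin n → ℝ) :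
    Measurable (supDiff g ε) :=
  Measurable.iSup fun j => by fun_prop

lemma measurable_supDev [Countable ι] (D : Measure X) (hgm : ∀ j, Measurable (g j)) (s : ℝ) :
    Measurable (supDev (n := n) D g s) :=
  Measurable.iSup fun j => by fun_prop

lemma integrable_supAvg [Countable ι] [Nonempty ι] {μ : Measure (Fin n → X)} [IsFiniteMeasure μ]
    (hgm : ∀ j, Measurable (g j)) (hg : ∀ j x, |g j x| ≤ 1) {ε : Fin n → ℝ}
    (hε : ∀ i, |ε i| = 1) : Integrable (supAvg g ε) μ :=
  integrable_of_abs_le (measurable_supAvg hgm ε) fun x => abs_ciSup_le (abs_supAvg_term_le hg hε x)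

lemma integrable_supDiff [Countable ι] [Nonempty ι] {μ : Measure (Fin n → X × X)} [IsFiniteMeasure μ]
    (hgm : ∀ j, Measurable (g j)) (hg : ∀ j x, |g j x| ≤ 1) {ε : Fin n → ℝ}
    (hε : ∀ i, |ε i| = 1) : Integrable (supDiff g ε) μ :=
  integrable_of_abs_le (measurable_supDiff hgm ε) fun w =>
    abs_ciSup_le (abs_supDiff_term_le hg hε w)

/-- Swapping the two entries of the pair `w i` flips the sign of the `i`-th difference and
preserves the product measure, so the signs do not affect the expectation of `supDiff`. -/
lemma integral_supDiff_eq [Countable ι] (D : Measure X) [IsProbabilityMeasure D]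
    (hgm : ∀ j, Measurable (g j)) {ε : Fin n → ℝ} (hε : ∀ i, |ε i| = 1) :
    ∫ w, supDiff g ε w ∂(Measure.pi fun _ => D.prod D)
      = ∫ w, supDiff g (fun _ => 1) w ∂(Measure.pi fun _ : Fin n => D.prod D) := by
  classical
  let sw : Fin n → X × X → X × X := fun i => if ε i = 1 then id else Prod.swap
  have hsw : MeasurePreserving (fun (w : Fin n → X × X) i => sw i (w i))
      (Measure.pi fun _ => D.prod D) (Measure.pi fun _ => D.prod D) := by
    refine measurePreserving_pi _ _ fun i => ?_
    by_cases h : ε i = 1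
    · simpa only [sw, if_pos h] using MeasurePreserving.id _
    · simpa only [sw, if_neg h] using Measure.measurePreserving_swap
  have key : ∀ w, supDiff g ε w = supDiff g (fun _ => 1) (fun i => sw i (w i)) := fun w => by
    unfold supDiff
    congr 1; funext j; congr 1
    refine Finset.sum_congr rfl fun i _ => ?_
    by_cases h : ε i = 1
    · simp [sw, h]
    · have h' : ε i = -1 := by
        rcases (abs_eq zero_le_one).1 (hε i) with h1 | h1
        · exact absurd h1 h
        · exact h1
      simp only [sw, if_neg h, h', Prod.fst_swap, Prod.snd_swap]; ring
  simp_rw [key]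
  exact integral_comp_of_measurePreserving hsw (measurable_supDiff hgm _)

/-- Splitting the differences bounds `supDiff` by two signed suprema, one for each half of the
paired sample. -/
lemma integral_supDiff_le [Countable ι] [Nonempty ι] (D : Measure X) [IsProbabilityMeasure D]
    (hgm : ∀ j, Measurable (g j)) (hg : ∀ j x, |g j x| ≤ 1) {ε : Fin n → ℝ}
    (hε : ∀ i, |ε i| = 1) :
    ∫ w, supDiff g ε w ∂(Measure.pi fun _ => D.prod D)
      ≤ ∫ x, supAvg g ε x ∂(Measure.pi fun _ => D)
        + ∫ x, supAvg g (fun i => -ε i) x ∂(Measure.pi fun _ => D) := by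
  have hε' : ∀ i, |-ε i| = 1 := fun i => by rw [abs_neg, hε]
  have h1 : MeasurePreserving (fun (w : Fin n → X × X) i => (w i).1)
      (Measure.pi fun _ => D.prod D) (Measure.pi fun _ => D) :=
    measurePreserving_pi _ _ fun i => measurePreserving_fst
  have h2 : MeasurePreserving (fun (w : Fin n → X × X) i => (w i).2)
      (Measure.pi fun _ => D.prod D) (Measure.pi fun _ => D) :=
    measurePreserving_pi _ _ fun i => measurePreserving_snd
  have i1 := h1.integrable_comp_of_integrable (integrable_supAvg hgm hg hε)
  have i2 := h2.integrable_comp_of_integrable (integrable_supAvg hgm hg hε')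
  rw [← integral_comp_of_measurePreserving h1 (measurable_supAvg hgm ε),
    ← integral_comp_of_measurePreserving h2 (measurable_supAvg hgm fun i => -ε i)]
  refine le_trans ?_ (integral_add i1 i2).le
  refine integral_mono (integrable_supDiff hgm hg hε) (i1.add i2) fun w => ?_
  refine ciSup_le fun j => ?_
  refine le_trans (le_of_eq ?_) (add_le_add
    (le_ciSup (bddAbove_of_abs_le (abs_supAvg_term_le hg hε fun i => (w i).1)) j)
    (le_ciSup (bddAbove_of_abs_le (abs_supAvg_term_le hg hε' fun i => (w i).2)) j))
  rw [← mul_add, ← Finset.sum_add_distrib]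
  congr 1
  exact Finset.sum_congr rfl fun i _ => by ring

/-- Replacing the true mean by the average over an independent ghost sample. -/
lemma integral_supDev_le_supDiff [Countable ι] [Nonempty ι] (D : Measure X) [IsProbabilityMeasure D] (hn : 1 ≤ n)
    (hgm : ∀ j, Measurable (g j)) (hg : ∀ j x, |g j x| ≤ 1) {s : ℝ} (hs : |s| = 1) :
    ∫ x, supDev D g s x ∂(Measure.pi fun _ : Fin n => D)
      ≤ ∫ w, supDiff g (fun _ => -s) w ∂(Measure.pi fun _ : Fin n => D.prod D) := by
  have hs' : |-s| = 1 := by rw [abs_neg, hs]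
  have hn0 : (n : ℝ) ≠ 0 := by positivity
  have hmp := measurePreserving_arrowProdEquivProdArrow X X (Fin n) (fun _ => D) (fun _ => D)
  have hpm : Measurable fun p : (Fin n → X) × (Fin n → X) =>
      supDiff g (fun _ => -s) fun i => (p.1 i, p.2 i) :=
    (measurable_supDiff hgm _).comp (by fun_prop)
  have hpi : Integrable (fun p : (Fin n → X) × (Fin n → X) =>
      supDiff g (fun _ => -s) fun i => (p.1 i, p.2 i))
      ((Measure.pi fun _ => D).prod (Measure.pi fun _ => D)) :=
    integrable_of_abs_le hpm fun p => abs_ciSup_le (abs_supDiff_term_le hg (fun _ => hs') _)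
  have e1 : ∫ w, supDiff g (fun _ => -s) w ∂(Measure.pi fun _ : Fin n => D.prod D)
      = ∫ x, ∫ y, supDiff g (fun _ => -s) (fun i => (x i, y i))
          ∂(Measure.pi fun _ : Fin n => D) ∂(Measure.pi fun _ : Fin n => D) := by
    rw [← integral_prod _ hpi]
    exact integral_comp_of_measurePreserving hmp hpm
  rw [e1]
  refine integral_mono (integrable_of_abs_le (measurable_supDev D hgm s) fun x =>
    abs_ciSup_le (abs_supDev_term_le D hg hs x)) hpi.integral_prod_left fun x => ?_
  refine ciSup_le fun j => ?_
  have hgi : ∀ i : Fin n, Integrable (fun y : Fin n → X => g j (y i))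
      (Measure.pi fun _ : Fin n => D) := fun i =>
    integrable_of_abs_le ((hgm j).comp (measurable_pi_apply i)) fun y => hg j _
  have hge : ∀ i : Fin n, ∫ y, g j (y i) ∂(Measure.pi fun _ : Fin n => D) = ∫ a, g j a ∂D :=
    fun i => integral_comp_of_measurePreserving (measurePreserving_eval (fun _ => D) i) (hgm j)
  have hdi : ∀ i : Fin n, Integrable (fun y : Fin n → X => -s * (g j (x i) - g j (y i)))
      (Measure.pi fun _ : Fin n => D) := fun i => ((integrable_const _).sub (hgi i)).const_mul _
  have e2 : s * (∫ y, g j y ∂D - (1 / (n : ℝ)) * ∑ i, g j (x i))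
      = ∫ y, (1 / (n : ℝ)) * ∑ i, -s * (g j (x i) - g j (y i))
          ∂(Measure.pi fun _ : Fin n => D) := by
    rw [integral_const_mul, integral_finsetSum _ fun i _ => hdi i]
    simp_rw [integral_const_mul, fun i => integral_sub (integrable_const (g j (x i))) (hgi i), hge]
    simp [← Finset.mul_sum, Finset.sum_sub_distrib]
    field_simp
    ring
  rw [e2]
  refine integral_mono ?_ ?_ fun y => ?_
  · exact (integrable_finsetSum _ fun i _ => hdi i).const_mul _
  · have hxm : Measurable fun y : Fin n → X => supDiff g (fun _ => -s) fun i => (x i, y i) :=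
      (measurable_supDiff hgm _).comp (by fun_prop)
    exact integrable_of_abs_le hxm fun y => abs_ciSup_le (abs_supDiff_term_le hg (fun _ => hs') _)
  · exact le_ciSup (bddAbove_of_abs_le (abs_supDiff_term_le hg (fun _ => hs')
      fun i => (x i, y i))) j

/-- The real sign vector `±1` encoded by a vector of Booleans. -/
def signVec (σ : Fin n → Bool) (i : Fin n) : ℝ := if σ i then 1 else -1

lemma abs_signVec (σ : Fin n → Bool) (i : Fin n) : |signVec σ i| = 1 := by
  unfold signVec; split_ifs <;> simp

/-- Symmetrization: the mean uniform deviation is at most twice the Rademacher complexity, by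
averaging the ghost-sample bound over all sign vectors; flipping every sign permutes them. -/
lemma integral_supDev_le [Countable ι] [Nonempty ι] (D : Measure X) [IsProbabilityMeasure D] (hn : 1 ≤ n)
    (hgm : ∀ j, Measurable (g j)) (hg : ∀ j x, |g j x| ≤ 1) {s : ℝ} (hs : |s| = 1) :
    ∫ x, supDev D g s x ∂(Measure.pi fun _ : Fin n => D)
      ≤ 2 * ∫ x, (∑ σ : Fin n → Bool, supAvg g (signVec σ) x) / 2 ^ n
          ∂(Measure.pi fun _ : Fin n => D) := by
  have hs' : |-s| = 1 := by rw [abs_neg, hs]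
  set A : (Fin n → Bool) → ℝ := fun σ =>
    ∫ x, supAvg g (signVec σ) x ∂(Measure.pi fun _ : Fin n => D) with hA
  have hσ : ∀ σ : Fin n → Bool, ∫ x, supDev D g s x ∂(Measure.pi fun _ : Fin n => D)
      ≤ A σ + A (fun i => !σ i) := fun σ => by
    refine (integral_supDev_le_supDiff D hn hgm hg hs).trans ?_
    rw [integral_supDiff_eq D hgm (fun _ => hs'), ← integral_supDiff_eq D hgm (abs_signVec σ)]
    refine (integral_supDiff_le D hgm hg (abs_signVec σ)).trans (le_of_eq ?_)
    have : (fun i => -signVec σ i) = signVec fun i => !σ i := by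
      funext i; unfold signVec; by_cases h : σ i <;> simp [h]
    rw [this]
  have hflip : ∑ σ : Fin n → Bool, A (fun i => !σ i) = ∑ σ, A σ :=
    Equiv.sum_comp (Equiv.piCongrRight fun _ : Fin n => Equiv.boolNot) A
  have hsum := Finset.sum_le_sum fun (σ : Fin n → Bool) (_ : σ ∈ Finset.univ) => hσ σ
  rw [Finset.sum_add_distrib, hflip] at hsum
  simp only [Finset.sum_const, Finset.card_univ, Fintype.card_pi, Fintype.card_bool,
    Finset.prod_const, Fintype.card_fin, nsmul_eq_mul, Nat.cast_pow, Nat.cast_ofNat] at hsum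
  rw [integral_div, integral_finsetSum _ fun σ _ => integrable_supAvg hgm hg (abs_signVec σ),
    mul_div_assoc', le_div_iff₀ (by positivity)]
  linarith

lemma supDev_update_sub_le [Nonempty ι] (D : Measure X) [IsProbabilityMeasure D]
    (hg0 : ∀ j x, 0 ≤ g j x) (hg1 : ∀ j x, g j x ≤ 1) {s : ℝ} (hs : |s| = 1)
    (x : Fin n → X) (i : Fin n) (a : X) :
    supDev D g s (Function.update x i a) - supDev D g s x ≤ 1 / n := by
  have hg : ∀ j x, |g j x| ≤ 1 := fun j x => abs_le.2 ⟨by linarith [hg0 j x], hg1 j x⟩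
  rw [sub_le_iff_le_add]
  refine ciSup_le fun j => ?_
  have h1 : s * (∫ y, g j y ∂D - (1 / (n : ℝ)) * ∑ k, g j (x k)) ≤ supDev D g s x :=
    le_ciSup (bddAbove_of_abs_le (abs_supDev_term_le D hg hs x)) j
  have h2 : ∑ k, g j (Function.update x i a k) - ∑ k, g j (x k) = g j a - g j (x i) := by
    rw [← Finset.sum_sub_distrib, Finset.sum_eq_single i]
    · simp
    · intro k _ hk; simp [Function.update_of_ne hk]
    · simp
  have h3 : -s * (g j a - g j (x i)) ≤ 1 := by
    refine (le_abs_self _).trans ?_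
    rw [abs_mul, abs_neg, hs, one_mul]
    exact abs_le.2 ⟨by linarith [hg0 j a, hg1 j (x i)], by linarith [hg1 j a, hg0 j (x i)]⟩
  have h4 : (1 / (n : ℝ)) * (-s * (g j a - g j (x i))) ≤ 1 / n * 1 :=
    mul_le_mul_of_nonneg_left h3 (by positivity)
  rw [← h2] at h4
  linarith

end Symmetrization

/-! ### The uniform deviation bound -/

lemma rademacher_eq {X : Type*} [MeasurableSpace X] (n : ℕ) (D : Measure X) (G : Set (X → ℝ)) :
    rademacher n D G = ∫ x, (∑ σ : Fin n → Bool, supAvg (fun j : G => (j : X → ℝ)) (signVec σ) x)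
      / 2 ^ n ∂(Measure.pi fun _ : Fin n => D) := by
  unfold rademacher supAvg
  congr 1; funext x; congr 1
  refine Finset.sum_congr rfl fun σ _ => ?_
  unfold iSup
  congr 1
  ext r
  constructor
  · rintro ⟨g, hg, rfl⟩; exact ⟨⟨g, hg⟩, rfl⟩
  · rintro ⟨⟨g, hg⟩, rfl⟩; exact ⟨g, hg, rfl⟩

/-- The Rademacher generalization bound, one-sided in the direction of the sign `s`. McDiarmid's
inequality gives failure probability `δ / 2`; the weaker bound `δ` suffices for the union bound. -/
lemma uniform_deviation {X : Type*} [MeasurableSpace X] (D : Measure X) [IsProbabilityMeasure D]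
    {G : Set (X → ℝ)} (hGc : G.Countable) (hGne : G.Nonempty) (hGm : ∀ g ∈ G, Measurable g)
    (hG0 : ∀ g ∈ G, ∀ x, 0 ≤ g x) (hG1 : ∀ g ∈ G, ∀ x, g x ≤ 1) {n : ℕ} (hn : 1 ≤ n)
    {δ : ℝ} (hδ : 0 < δ) (hδ2 : δ ≤ 2) {s : ℝ} (hs : |s| = 1) :
    (Measure.pi fun _ : Fin n => D)
      {x | ∃ g ∈ G, 2 * rademacher n D G + Real.sqrt (Real.log (2 / δ) / (2 * n))
        < s * (∫ y, g y ∂D - (1 / (n : ℝ)) * ∑ i, g (x i))} ≤ ENNReal.ofReal δ := by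
  have hn0 : (0 : ℝ) < n := by exact_mod_cast hn
  have : Countable G := hGc.to_subtype
  have : Nonempty G := hGne.to_subtype
  let g : G → X → ℝ := fun j => j
  have hgm : ∀ j, Measurable (g j) := fun j => hGm j j.2
  have hg0 : ∀ j x, 0 ≤ g j x := fun j => hG0 j j.2
  have hg1 : ∀ j x, g j x ≤ 1 := fun j => hG1 j j.2
  have hg : ∀ j x, |g j x| ≤ 1 := fun j x => abs_le.2 ⟨by linarith [hg0 j x], hg1 j x⟩
  have hsym := integral_supDev_le (n := n) D hn hgm hg hs
  rw [← rademacher_eq] at hsym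
  have hlog : 0 ≤ Real.log (2 / δ) := Real.log_nonneg ((one_le_div hδ).2 hδ2)
  have hmc := mcdiarmid D hn (measurable_supDev D hgm s)
    (fun x => abs_ciSup_le (abs_supDev_term_le D hg hs x))
    (supDev_update_sub_le D hg0 hg1 hs) (Real.sqrt_nonneg (Real.log (2 / δ) / (2 * n)))
  refine (measure_mono ?_).trans (hmc.trans (ENNReal.ofReal_le_ofReal ?_))
  · rintro x ⟨f, hf, hx⟩
    have : s * (∫ y, f y ∂D - (1 / (n : ℝ)) * ∑ i, f (x i)) ≤ supDev D g s x :=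
      le_ciSup (bddAbove_of_abs_le (abs_supDev_term_le D hg hs x)) ⟨f, hf⟩
    simp only [Set.mem_ofPred_eq]
    linarith
  · rw [Real.sq_sqrt (by positivity)]
    have : -2 * (n : ℝ) * (Real.log (2 / δ) / (2 * n)) = -Real.log (2 / δ) := by
      field_simp
    rw [this, Real.exp_neg, Real.exp_log (by positivity), inv_div]
    linarith

/-! ### The determinacy disparity -/

section Disparity

variable {K : ℕ}

lemma sum_mul_nonneg {p q : Fin K → ℝ} (hp : inSimplex p) (hq : inSimplex q) :
    0 ≤ ∑ k, p k * q k := Finset.sum_nonneg fun k _ => mul_nonneg (hp.1 k) (hq.1 k)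

lemma inSimplex.le_one {p : Fin K → ℝ} (hp : inSimplex p) (k : Fin K) : p k ≤ 1 := by
  rw [← hp.2]
  exact Finset.single_le_sum (fun i _ => hp.1 i) (Finset.mem_univ k)

lemma Gam_le_one {p q : Fin K → ℝ} (hp : inSimplex p) (hq : inSimplex q) : Gam p q ≤ 1 := by
  unfold Gam; linarith [sum_mul_nonneg hp hq]

lemma Gam_nonneg {p q : Fin K → ℝ} (hp : inSimplex p) (hq : inSimplex q) : 0 ≤ Gam p q := by
  have : ∑ k, p k * q k ≤ ∑ k, p k :=
    Finset.sum_le_sum fun k _ => mul_le_of_le_one_right (hp.1 k) (hq.le_one k)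
  unfold Gam; linarith [hp.2]

lemma abs_Gam_le {p q : Fin K → ℝ} (hp : inSimplex p) (hq : inSimplex q) : |Gam p q| ≤ 1 :=
  abs_le.2 ⟨by linarith [Gam_nonneg hp hq], Gam_le_one hp hq⟩

lemma Gam_comm (p q : Fin K → ℝ) : Gam p q = Gam q p := by
  unfold Gam; simp_rw [mul_comm]

/-- The triangle inequality for the disparity: it amounts to `p·q + q·r ≤ 1 + p·r`, which
follows by averaging `p k + r k ≤ 1 + p·r` against the weights `q k`. -/
lemma Gam_triangle {p q r : Fin K → ℝ} (hp : inSimplex p) (hq : inSimplex q)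
    (hr : inSimplex r) : Gam p r ≤ Gam p q + Gam q r := by
  have hk : ∀ k, p k + r k ≤ 1 + ∑ l, p l * r l := fun k => by
    have h1 : p k * r k ≤ ∑ l, p l * r l :=
      Finset.single_le_sum (f := fun l => p l * r l)
        (fun i _ => mul_nonneg (hp.1 i) (hr.1 i)) (Finset.mem_univ k)
    nlinarith [hp.le_one k, hr.le_one k]
  have hsum : ∑ k, q k * (p k + r k) ≤ ∑ k, q k * (1 + ∑ l, p l * r l) :=
    Finset.sum_le_sum fun k _ => mul_le_mul_of_nonneg_left (hk k) (hq.1 k)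
  rw [← Finset.sum_mul, hq.2, one_mul] at hsum
  have hsplit : ∑ k, q k * (p k + r k) = ∑ k, p k * q k + ∑ k, q k * r k := by
    rw [← Finset.sum_add_distrib]
    exact Finset.sum_congr rfl fun k _ => by ring
  unfold Gam
  linarith

variable {X : Type*} [MeasurableSpace X] {h₁ h₂ h₃ : X → Fin K → ℝ}

lemma measurable_Gam (m₁ : Measurable h₁) (m₂ : Measurable h₂) :
    Measurable fun x => Gam (h₁ x) (h₂ x) := by
  unfold Gam
  fun_prop

lemma integrable_Gam {D : Measure X} [IsFiniteMeasure D] (m₁ : Measurable h₁)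
    (m₂ : Measurable h₂) (s₁ : ∀ x, inSimplex (h₁ x)) (s₂ : ∀ x, inSimplex (h₂ x)) :
    Integrable (fun x => Gam (h₁ x) (h₂ x)) D :=
  integrable_of_abs_le (measurable_Gam m₁ m₂) fun x => abs_Gam_le (s₁ x) (s₂ x)

lemma dis_comm (D : Measure X) (h₁ h₂ : X → Fin K → ℝ) : dis D h₁ h₂ = dis D h₂ h₁ := by
  unfold dis; simp_rw [Gam_comm (h₁ _)]

lemma dis_triangle (D : Measure X) [IsFiniteMeasure D] (m₁ : Measurable h₁) (m₂ : Measurable h₂)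
    (m₃ : Measurable h₃) (s₁ : ∀ x, inSimplex (h₁ x)) (s₂ : ∀ x, inSimplex (h₂ x))
    (s₃ : ∀ x, inSimplex (h₃ x)) : dis D h₁ h₃ ≤ dis D h₁ h₂ + dis D h₂ h₃ := by
  unfold dis
  rw [← integral_add (integrable_Gam m₁ m₂ s₁ s₂) (integrable_Gam m₂ m₃ s₂ s₃)]
  exact integral_mono (integrable_Gam m₁ m₃ s₁ s₃)
    ((integrable_Gam m₁ m₂ s₁ s₂).add (integrable_Gam m₂ m₃ s₂ s₃))
    fun x => Gam_triangle (s₁ x) (s₂ x) (s₃ x)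

lemma dis_empMeasure {n : ℕ} (x : Fin n → X) (m₁ : Measurable h₁) (m₂ : Measurable h₂)
    (s₁ : ∀ x, inSimplex (h₁ x)) (s₂ : ∀ x, inSimplex (h₂ x)) :
    dis (empMeasure x) h₁ h₂ = (1 / (n : ℝ)) * ∑ i, Gam (h₁ (x i)) (h₂ (x i)) := by
  unfold dis empMeasure
  rw [integral_smul_measure, integral_finsetSum_measure fun i _ => integrable_Gam m₁ m₂ s₁ s₂]
  simp_rw [integral_dirac' _ _ (measurable_Gam m₁ m₂).stronglyMeasurable]
  simp

lemma abs_dis_empMeasure_le {n : ℕ} (x : Fin n → X) (m₁ : Measurable h₁) (m₂ : Measurable h₂)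
    (s₁ : ∀ x, inSimplex (h₁ x)) (s₂ : ∀ x, inSimplex (h₂ x)) :
    |dis (empMeasure x) h₁ h₂| ≤ 1 := by
  rw [dis_empMeasure x m₁ m₂ s₁ s₂]
  exact abs_avg_le zero_le_one fun i => abs_Gam_le (s₁ _) (s₂ _)

end Disparity

lemma countable_GGam {X : Type*} {K : ℕ} {H : Set (X → Fin K → ℝ)} (hH : H.Countable) :
    (GGam H).Countable := by
  refine ((hH.prod hH).image fun p x => Gam (p.1 x) (p.2 x)).mono ?_
  rintro g ⟨h₁, hh₁, h₂, hh₂, rfl⟩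
  exact ⟨(h₁, h₂), ⟨hh₁, hh₂⟩, rfl⟩

lemma countable_LSclass {X : Type*} {K : ℕ} {H : Set (X → Fin K → ℝ)} (hH : H.Countable)
    (yS : X → Fin K → ℝ) : (LSclass H yS).Countable := by
  refine (hH.image fun h x => Gam (h x) (yS x)).mono ?_
  rintro g ⟨h, hh, rfl⟩
  exact ⟨h, hh, rfl⟩

/-- Theorem 1, generalization bound of BCDM: with probability at least
1 − 3δ over independent samples x ∼ S^n, z ∼ T^m, every h ∈ H satisfies
e_T(h) ≤ e_{Ŝₓ}(h) + d_{h,H}(Ŝₓ, T̂_z) + λ + Ω, where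
λ = inf_{h'∈H}(e_S(h') + e_T(h')) and
Ω = 2R_{n,S}(G_Γ H) + 2R_{n,S}(L_S H) + 2√(log(2/δ)/(2n)) + 2R_{m,T}(G_Γ H) + √(log(2/δ)/(2m)). -/
theorem bcdm_generalization_bound {X : Type*} [MeasurableSpace X] (K : ℕ) (hK : 1 ≤ K)
    (H : Set (X → Fin K → ℝ)) (hHc : H.Countable) (hHne : H.Nonempty)
    (hHm : ∀ h' ∈ H, Measurable h') (hHs : ∀ h' ∈ H, ∀ x, inSimplex (h' x))
    (S T : Measure X) [IsProbabilityMeasure S] [IsProbabilityMeasure T]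
    (yS yT : X → Fin K → ℝ) (hyS : Measurable yS) (hyT : Measurable yT)
    (hySs : ∀ x, inSimplex (yS x)) (hyTs : ∀ x, inSimplex (yT x))
    (n m : ℕ) (hn : 1 ≤ n) (hm : 1 ≤ m) (δ : ℝ) (hδ : 0 < δ) :
    ((Measure.pi fun _ : Fin n => S).prod (Measure.pi fun _ : Fin m => T))
      {xz : (Fin n → X) × (Fin m → X) | ¬ ∀ h ∈ H,
        dis T h yT ≤
          dis (empMeasure xz.1) h yS + ddd H h (empMeasure xz.1) (empMeasure xz.2) +
          sInf {r | ∃ h' ∈ H, r = dis S h' yS + dis T h' yT} +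
          (2 * rademacher n S (GGam H) + 2 * rademacher n S (LSclass H yS) +
            2 * Real.sqrt (Real.log (2 / δ) / (2 * n)) +
            2 * rademacher m T (GGam H) + Real.sqrt (Real.log (2 / δ) / (2 * m)))} ≤
      ENNReal.ofReal (3 * δ) := by
  set μ := Measure.pi fun _ : Fin n => S
  set ν := Measure.pi fun _ : Fin m => T
  -- For `δ > 1/3` the bound exceeds `1`; otherwise `log (2 / δ) ≥ 0`.
  rcases lt_or_ge (1 / 3) δ with hδ3 | hδ3
  · refine prob_le_one.trans ?_
    rw [ENNReal.one_le_ofReal]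
    linarith
  have hδ2 : δ ≤ 2 := by linarith
  obtain ⟨h₀, hh₀⟩ := hHne
  have hGne : (GGam H).Nonempty := ⟨_, h₀, hh₀, h₀, hh₀, rfl⟩
  have hLne : (LSclass H yS).Nonempty := ⟨_, h₀, hh₀, rfl⟩
  have hGm : ∀ g ∈ GGam H, Measurable g := by
    rintro g ⟨a, ha, b, hb, rfl⟩; exact measurable_Gam (hHm a ha) (hHm b hb)
  have hG0 : ∀ g ∈ GGam H, ∀ x, 0 ≤ g x := by
    rintro g ⟨a, ha, b, hb, rfl⟩ x; exact Gam_nonneg (hHs a ha x) (hHs b hb x)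
  have hG1 : ∀ g ∈ GGam H, ∀ x, g x ≤ 1 := by
    rintro g ⟨a, ha, b, hb, rfl⟩ x; exact Gam_le_one (hHs a ha x) (hHs b hb x)
  have hLm : ∀ g ∈ LSclass H yS, Measurable g := by
    rintro g ⟨a, ha, rfl⟩; exact measurable_Gam (hHm a ha) hyS
  have hL0 : ∀ g ∈ LSclass H yS, ∀ x, 0 ≤ g x := by
    rintro g ⟨a, ha, rfl⟩ x; exact Gam_nonneg (hHs a ha x) (hySs x)
  have hL1 : ∀ g ∈ LSclass H yS, ∀ x, g x ≤ 1 := by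
    rintro g ⟨a, ha, rfl⟩ x; exact Gam_le_one (hHs a ha x) (hySs x)
  have b1 := uniform_deviation S (countable_GGam hHc) hGne hGm hG0 hG1 hn hδ hδ2
    (s := -1) (by simp)
  have b2 := uniform_deviation S (countable_LSclass hHc yS) hLne hLm hL0 hL1 hn hδ hδ2
    (s := 1) (by simp)
  have b3 := uniform_deviation T (countable_GGam hHc) hGne hGm hG0 hG1 hm hδ hδ2
    (s := 1) (by simp)
  -- `B1`, `B2`, `B3` are the bad events for `-dis_S(h', h)`, `e_S(h)` and `dis_T(h', h)`.
  set B1 := {x : Fin n → X | ∃ g ∈ GGam H, 2 * rademacher n S (GGam H)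
    + Real.sqrt (Real.log (2 / δ) / (2 * n))
      < -1 * (∫ y, g y ∂S - (1 / (n : ℝ)) * ∑ i, g (x i))} with hB1
  set B2 := {x : Fin n → X | ∃ g ∈ LSclass H yS, 2 * rademacher n S (LSclass H yS)
    + Real.sqrt (Real.log (2 / δ) / (2 * n))
      < 1 * (∫ y, g y ∂S - (1 / (n : ℝ)) * ∑ i, g (x i))} with hB2
  set B3 := {x : Fin m → X | ∃ g ∈ GGam H, 2 * rademacher m T (GGam H)
    + Real.sqrt (Real.log (2 / δ) / (2 * m))
      < 1 * (∫ y, g y ∂T - (1 / (m : ℝ)) * ∑ i, g (x i))} with hB3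
  have hprob : (μ.prod ν) ((B1 ×ˢ Set.univ ∪ B2 ×ˢ Set.univ) ∪ Set.univ ×ˢ B3)
      ≤ ENNReal.ofReal (3 * δ) := by
    refine (measure_union_le _ _).trans ?_
    refine (add_le_add_left (measure_union_le _ _) _).trans ?_
    simp only [Measure.prod_prod, measure_univ, mul_one, one_mul]
    refine (add_le_add (add_le_add b1 b2) b3).trans (le_of_eq ?_)
    rw [← ENNReal.ofReal_add hδ.le hδ.le, ← ENNReal.ofReal_add (by positivity) hδ.le]
    congr 1; ring
  refine (measure_mono ?_).trans hprob
  rintro ⟨x, z⟩ hxz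
  by_contra hgood
  refine hxz fun h hh => ?_
  simp only [Set.mem_union, Set.mem_prod, Set.mem_univ, and_true, true_and, not_or] at hgood
  obtain ⟨⟨g1, g2⟩, g3⟩ := hgood
  simp only [hB1, hB2, hB3, Set.mem_ofPred_eq, not_exists, not_and, not_lt] at g1 g2 g3
  have mh := hHm h hh
  have sh := hHs h hh
  have c2 : dis S h yS - dis (empMeasure x) h yS
      ≤ 2 * rademacher n S (LSclass H yS) + Real.sqrt (Real.log (2 / δ) / (2 * n)) := by
    rw [dis_empMeasure x mh hyS sh hySs, ← one_mul (dis S h yS - _)]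
    exact g2 _ ⟨h, hh, rfl⟩
  have key : ∀ h' ∈ H, dis T h yT - (dis (empMeasure x) h yS
      + ddd H h (empMeasure x) (empMeasure z)
      + (2 * rademacher n S (GGam H) + 2 * rademacher n S (LSclass H yS) +
            2 * Real.sqrt (Real.log (2 / δ) / (2 * n)) +
            2 * rademacher m T (GGam H) + Real.sqrt (Real.log (2 / δ) / (2 * m))))
      ≤ dis S h' yS + dis T h' yT := by
    intro h' hh'
    have mh' := hHm h' hh'
    have sh' := hHs h' hh'
    have c1 : dis (empMeasure x) h' h - dis S h' h
        ≤ 2 * rademacher n S (GGam H) + Real.sqrt (Real.log (2 / δ) / (2 * n)) := by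
      refine le_trans (le_of_eq ?_) (g1 _ ⟨h', hh', h, hh, rfl⟩)
      rw [dis_empMeasure x mh' mh sh' sh, dis]; ring
    have c3 : dis T h' h - dis (empMeasure z) h' h
        ≤ 2 * rademacher m T (GGam H) + Real.sqrt (Real.log (2 / δ) / (2 * m)) := by
      refine le_trans (le_of_eq ?_) (g3 _ ⟨h', hh', h, hh, rfl⟩)
      rw [dis_empMeasure z mh' mh sh' sh, dis]; ring
    have c4 : dis (empMeasure z) h' h - dis (empMeasure x) h' h
        ≤ ddd H h (empMeasure x) (empMeasure z) := by
      refine le_csSup ⟨2, ?_⟩ ⟨h', hh', rfl⟩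
      rintro _ ⟨k, hk, rfl⟩
      have := abs_le.1 (abs_dis_empMeasure_le z (hHm k hk) mh (hHs k hk) sh)
      have := abs_le.1 (abs_dis_empMeasure_le x (hHm k hk) mh (hHs k hk) sh)
      linarith
    have t1 := dis_triangle T mh mh' hyT sh sh' hyTs
    have t2 := dis_triangle S mh' hyS mh sh' hySs sh
    rw [dis_comm T h h'] at t1
    rw [dis_comm S yS h] at t2
    linarith
  have hinf := le_csInf (s := {r | ∃ h' ∈ H, r = dis S h' yS + dis T h' yT})
    ⟨_, h₀, hh₀, rfl⟩ (by rintro _ ⟨h', hh', rfl⟩; exact key h' hh')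
  linarith
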